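/- Let f_1, ..., f_n ∈ L^1([0,1]; ℂ). Then there exists h ∈ C^∞([0,1]; S^1) with ‖h‖_{W^{1,1}} ≤ 1 + 2πn such that ∫_0^1 f_j(x) h(x) dx = 0 for all j = 1, ..., n. -/

import Mathlib

open MeasureTheory

namespace LL

set_option linter.unusedSectionVars false
set_option linter.deprecated false

section chains
variable {E : Type*}

abbrev Ch (E : Type*) := List E →₀ ZMod 2

noncomputable def cone (a : E) : Ch E →ₗ[ZMod 2] Ch E := Finsupp.lmapDomain _ _ (List.cons a)

lemma cone_single (a : E) (l : List E) (r : ZMod 2) :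
    cone a (Finsupp.single l r) = Finsupp.single (a :: l) r := by
  simp [cone]

noncomputable def bdl : List E → Ch E
  | [] => 0
  | a :: l => Finsupp.single l 1 + cone a (bdl l)

noncomputable def bd : Ch E →ₗ[ZMod 2] Ch E := Finsupp.linearCombination (ZMod 2) bdl

lemma bd_single (l : List E) : bd (Finsupp.single l 1) = bdl l := by
  simp [bd]

lemma ch_two (c : Ch E) : c + c = 0 := by
  ext l; simp [CharTwo.add_self_eq_zero]

lemma lin_ext {M : Type*} [AddCommMonoid M] [Module (ZMod 2) M] {f g : Ch E →ₗ[ZMod 2] M}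
    (h : ∀ l, f (Finsupp.single l 1) = g (Finsupp.single l 1)) : f = g := by
  apply Finsupp.lhom_ext'
  intro l
  ext
  simpa using h l

lemma bd_cone (a : E) (c : Ch E) : bd (cone a c) = c + cone a (bd c) := by
  have : bd ∘ₗ cone a = LinearMap.id + cone a ∘ₗ (bd : Ch E →ₗ[ZMod 2] Ch E) := by
    apply lin_ext
    intro l
    simp [cone_single, bd_single, bdl]
  exact LinearMap.congr_fun this c

lemma bd_bdl (l : List E) : bd (bdl l) = 0 := by
  induction l with
  | nil => simp [bdl]
  | cons a l ih =>
    simp [bdl, bd_cone, bd_single, ih, ch_two]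

lemma bd_bd (c : Ch E) : bd (bd c) = 0 := by
  have : bd ∘ₗ bd = (0 : Ch E →ₗ[ZMod 2] Ch E) := by
    apply lin_ext
    intro l
    simp [bd_single, bd_bdl]
  exact LinearMap.congr_fun this c

abbrev Sup (S : Set (List E)) : Submodule (ZMod 2) (Ch E) := Finsupp.supported (ZMod 2) (ZMod 2) S

lemma map_sup {S : Set (List E)} {M : Type*} [AddCommMonoid M] [Module (ZMod 2) M]
    (f : Ch E →ₗ[ZMod 2] M) (T : Submodule (ZMod 2) M)
    (h : ∀ l ∈ S, f (Finsupp.single l 1) ∈ T) {c : Ch E} (hc : c ∈ Sup S) : f c ∈ T := by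
  rw [Sup, Finsupp.supported_eq_span_single] at hc
  have : Submodule.span (ZMod 2) ((fun i => Finsupp.single i (1 : ZMod 2)) '' S) ≤ T.comap f := by
    rw [Submodule.span_le]
    rintro _ ⟨l, hl, rfl⟩
    exact h l hl
  exact this hc

lemma eq_on_sup {S : Set (List E)} {M : Type*} [AddCommGroup M] [Module (ZMod 2) M]
    (f g : Ch E →ₗ[ZMod 2] M)
    (h : ∀ l ∈ S, f (Finsupp.single l 1) = g (Finsupp.single l 1)) {c : Ch E} (hc : c ∈ Sup S) :
    f c = g c := by
  have := map_sup (f - g) ⊥ (fun l hl => by simp [h l hl]) hc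
  simpa [sub_eq_zero] using this

lemma single_sup {S : Set (List E)} {l : List E} (h : l ∈ S) :
    (Finsupp.single l 1 : Ch E) ∈ Sup S := Finsupp.single_mem_supported _ _ h

lemma cone_sup {S T : Set (List E)} (a : E) (h : ∀ l ∈ S, a :: l ∈ T) {c : Ch E}
    (hc : c ∈ Sup S) : cone a c ∈ Sup T :=
  map_sup _ _ (fun l hl => by rw [cone_single]; exact single_sup (h l hl)) hc

lemma bdl_sup (l : List E) : bdl l ∈ Sup {t | t.length + 1 = l.length ∧ ∀ x ∈ t, x ∈ l} := by
  induction l with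
  | nil => simp [bdl]
  | cons a l ih =>
    rw [bdl]
    refine Submodule.add_mem _ (single_sup ?_) (cone_sup a ?_ ih)
    · simp +contextual
    · rintro t ⟨h1, h2⟩
      refine ⟨by simp [h1], ?_⟩
      intro x hx
      simp only [List.mem_cons] at hx ⊢
      rcases hx with h | h
      · exact Or.inl h
      · exact Or.inr (h2 x h)

lemma sup_mono {S T : Set (List E)} (h : S ⊆ T) {c : Ch E} (hc : c ∈ Sup S) : c ∈ Sup T :=
  Finsupp.supported_mono h hc

lemma bd_len {k : ℕ} {c : Ch E} (hc : c ∈ Sup {l : List E | l.length = k + 1}) :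
    bd c ∈ Sup {l : List E | l.length = k} := by
  refine map_sup bd _ (fun l hl => ?_) hc
  rw [bd_single]
  refine sup_mono ?_ (bdl_sup l)
  rintro t ⟨h, -⟩
  simp only [Set.mem_setOf_eq] at hl ⊢
  omega

/-! cochains -/
variable (s : ℕ → E → ZMod 2)

def Wl : List E → ZMod 2
  | [] => 0
  | [_] => 1
  | a :: b :: l => (s l.length a + s l.length b) * Wl (b :: l)

def Pl : List E → ZMod 2
  | [] => 0
  | a :: l => s l.length a * Wl s (a :: l)

noncomputable def W : Ch E →ₗ[ZMod 2] ZMod 2 := Finsupp.linearCombination (ZMod 2) (Wl s)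
noncomputable def P : Ch E →ₗ[ZMod 2] ZMod 2 := Finsupp.linearCombination (ZMod 2) (Pl s)

lemma W_single (l : List E) : W s (Finsupp.single l 1) = Wl s l := by simp [W]
lemma P_single (l : List E) : P s (Finsupp.single l 1) = Pl s l := by simp [P]

lemma P_cone (a : E) (k : ℕ) {c : Ch E} (hc : c ∈ Sup {l : List E | l.length = k}) :
    P s (cone a c) = s k a * W s (cone a c) := by
  have := eq_on_sup (S := {l : List E | l.length = k}) (P s ∘ₗ cone a)
    (s k a • (W s ∘ₗ cone a)) ?_ hc
  · simpa using this
  · intro l hl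
    simp only [Set.mem_setOf_eq] at hl
    simp [cone_single, P_single, W_single, Pl, hl]

lemma zm2 (a b c : ZMod 2) : a * b + c * (0 - b) = (c + a) * b := by
  revert a b c; decide

lemma stepB (k : ℕ) (hA : ∀ l : List E, l.length = k + 2 → W s (bdl l) = 0) (l : List E)
    (hl : l.length = k + 2) : P s (bdl l) = Wl s l := by
  match l, hl with
  | a :: b :: l, hl =>
    have hk : l.length = k := by simpa using hl
    have h1 : bdl (b :: l) ∈ Sup {t : List E | t.length = k} := by
      refine sup_mono ?_ (bdl_sup _)
      rintro t ⟨h, -⟩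
      simp at h ⊢; omega
    have h0 := hA _ hl
    rw [bdl] at h0 ⊢
    rw [map_add, W_single] at h0
    rw [map_add, P_single, P_cone s a k h1, eq_sub_of_add_eq' h0, Pl, Wl, hk, zm2]

lemma WP (k : ℕ) : ∀ l : List E, l.length = k + 2 → W s (bdl l) = 0 ∧ P s (bdl l) = Wl s l := by
  induction k with
  | zero =>
    have hA : ∀ l : List E, l.length = 0 + 2 → W s (bdl l) = 0 := by
      intro l hl
      match l, hl with
      | [a, b], _ =>
        simp [bdl, cone_single, W_single, Wl]
        decide
    exact fun l hl => ⟨hA l hl, stepB s 0 hA l hl⟩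
  | succ k ih =>
    have hA : ∀ l : List E, l.length = (k + 1) + 2 → W s (bdl l) = 0 := by
      intro l hl
      have h1 : bdl l ∈ Sup {t : List E | t.length = k + 2} := by
        refine sup_mono ?_ (bdl_sup _)
        rintro t ⟨h, -⟩
        simp at h ⊢; omega
      have := eq_on_sup (W s) (P s ∘ₗ bd) (fun t ht => by
        simp only [LinearMap.comp_apply, bd_single, W_single]
        exact (ih t ht).2.symm) h1
      rw [this]
      simp [bd_bdl]
    exact fun l hl => ⟨hA l hl, stepB s _ hA l hl⟩

lemma W_eq_P_bd (k : ℕ) {c : Ch E} (hc : c ∈ Sup {t : List E | t.length = k + 2}) :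
    W s c = P s (bd c) :=
  eq_on_sup (W s) (P s ∘ₗ bd) (fun t ht => by
        simp only [LinearMap.comp_apply, bd_single, W_single]
        exact (WP s k t ht).2.symm) hc

lemma Wl_ne {l : List E} : ∀ (d : ℕ), l.length = d + 1 → Wl s l ≠ 0 → ∀ i < d, 
    ∃ a ∈ l, ∃ b ∈ l, s i a ≠ s i b := by
  induction l with
  | nil => intro d h; simp at h
  | cons a l ih =>
    intro d hd hW i hi
    cases l with
    | nil => simp at hd; omega
    | cons b l =>
      rw [Wl] at hW
      have hl : l.length + 1 = d := by simpa using hd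
      by_cases h : i = l.length
      · refine ⟨a, by simp, b, by simp, ?_⟩
        intro hab
        rw [h] at hab
        rw [hab, CharTwo.add_self_eq_zero] at hW
        simp at hW
      · obtain ⟨x, hx, y, hy, hxy⟩ := ih l.length (by simp)
          (right_ne_zero_of_mul hW) i (by omega)
        exact ⟨x, List.mem_cons_of_mem _ hx, y, List.mem_cons_of_mem _ hy, hxy⟩

end chains

section neg
variable {E : Type*} [NormedAddCommGroup E] [NormedSpace ℝ E]

noncomputable def tau : Ch E →ₗ[ZMod 2] Ch E := Finsupp.lmapDomain _ _ (List.map Neg.neg)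

lemma tau_single (l : List E) (r : ZMod 2) :
    tau (Finsupp.single l r) = Finsupp.single (l.map Neg.neg) r := by simp [tau]

lemma tau_cone (a : E) (c : Ch E) : tau (cone a c) = cone (-a) (tau c) := by
  have : tau ∘ₗ cone a = cone (-a) ∘ₗ tau := by
    apply lin_ext; intro l; simp [cone_single, tau_single]
  exact LinearMap.congr_fun this c

lemma tau_bdl (l : List E) : tau (bdl l) = bdl (l.map Neg.neg) := by
  induction l with
  | nil => simp [bdl]
  | cons a l ih => simp [bdl, tau_cone, tau_single, ih]

lemma tau_bd (c : Ch E) : tau (bd c) = bd (tau c) := by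
  have : tau ∘ₗ bd = bd ∘ₗ (tau : Ch E →ₗ[ZMod 2] Ch E) := by
    apply lin_ext; intro l; simp [bd_single, tau_single, tau_bdl]
  exact LinearMap.congr_fun this c

lemma P_tau (s : ℕ → E → ZMod 2) (hs : ∀ i x, x ≠ 0 → s i (-x) = s i x + 1) {c : Ch E}
    (hc : c ∈ Sup {l : List E | ∀ x ∈ l, x ≠ 0}) : P s (c + tau c) = W s c := by
  have hW : ∀ l : List E, (∀ x ∈ l, x ≠ 0) → Wl s (l.map Neg.neg) = Wl s l := by
    intro l
    induction l with
    | nil => simp [Wl]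
    | cons a l ih =>
      intro h
      match l, ih, h with
      | [], _, _ => simp [Wl]
      | b :: l, ih, h =>
        have ih' := ih (fun x hx => h x (List.mem_cons_of_mem _ hx))
        simp only [List.map_cons] at ih' ⊢
        rw [Wl, Wl, ih', List.length_map, hs _ a (h a (by simp)), hs _ b (h b (by simp))]
        congr 1
        generalize s l.length a = p
        generalize s l.length b = q
        revert p q; decide
  refine eq_on_sup (P s ∘ₗ (LinearMap.id + tau)) (W s) ?_ hc
  intro l hl
  simp only [LinearMap.comp_apply, LinearMap.add_apply, LinearMap.id_apply, tau_single, map_add,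
    P_single, W_single]
  match l, hl with
  | [], _ => simp [Pl, Wl]
  | a :: l, hl =>
    have := hW _ hl
    simp only [List.map_cons] at this ⊢
    rw [Pl, Pl, this, List.length_map, hs _ a (hl a (by simp))]
    generalize s l.length a = p
    generalize Wl s (a :: l) = q
    revert p q; decide

noncomputable def bary (l : List E) : E := (l.length : ℝ)⁻¹ • l.sum

noncomputable def sd : ℕ → Ch E →ₗ[ZMod 2] Ch E
  | 0 => LinearMap.id
  | k + 1 => Finsupp.linearCombination (ZMod 2) (fun l => cone (bary l) (sd k (bdl l)))

lemma sd_single (k : ℕ) (l : List E) :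
    sd (k + 1) (Finsupp.single l 1) = cone (bary l) (sd k (bdl l)) := by simp [sd]

lemma bd_sd (k : ℕ) : ∀ {c : Ch E}, c ∈ Sup {l : List E | l.length = k + 1} →
    bd (sd (k + 1) c) = sd k (bd c) := by
  induction k with
  | zero =>
    intro c hc
    have h : (bd ∘ₗ sd (0 + 1)) c = (sd 0 ∘ₗ bd) c := by
      apply eq_on_sup _ _ _ hc
      intro l hl
      obtain ⟨a, rfl⟩ := List.length_eq_one_iff.1 hl
      simp only [LinearMap.comp_apply, sd_single, bd_single, bd_cone]
      simp [sd, bdl, bd_single]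
    exact h
  | succ k ih =>
    intro c hc
    have h : (bd ∘ₗ sd (k + 1 + 1)) c = (sd (k + 1) ∘ₗ bd) c := by
      apply eq_on_sup _ _ _ hc
      intro l hl
      have h2 : bdl l ∈ Sup {l : List E | l.length = k + 1} := by
        rw [← bd_single]; exact bd_len (single_sup hl)
      simp only [LinearMap.comp_apply, sd_single, bd_single, bd_cone]
      rw [ih h2, bd_bdl]
      simp
    exact h

lemma bary_neg (l : List E) : bary (l.map Neg.neg) = - bary l := by
  have : (l.map Neg.neg).sum = - l.sum := by
    induction l with
    | nil => simp
    | cons a l ih => rw [List.map_cons, List.sum_cons, List.sum_cons, ih]; abel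
  simp [bary, this]

lemma tau_sd (k : ℕ) : ∀ (c : Ch E), tau (sd k c) = sd k (tau c) := by
  induction k with
  | zero => intro c; simp [sd]
  | succ k ih =>
    intro c
    have : tau ∘ₗ sd (k + 1) = sd (k + 1) ∘ₗ (tau : Ch E →ₗ[ZMod 2] Ch E) := by
      apply lin_ext; intro l
      simp [sd_single, tau_single, tau_cone, ih, tau_bdl, bary_neg]
    exact LinearMap.congr_fun this c

lemma bary_mem {C : Set E} (hC : Convex ℝ C) {l : List E} (hl : l ≠ []) (h : ∀ x ∈ l, x ∈ C) :
    bary l ∈ C := by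
  have h1 : l.sum = ∑ i : Fin l.length, l.get i := by
    conv_lhs => rw [← List.ofFn_get l]
    rw [List.sum_ofFn]
  have hp : 0 < l.length := List.length_pos_iff.2 hl
  rw [bary, h1, Finset.smul_sum]
  apply hC.sum_mem
  · intro i _; positivity
  · simp; field_simp
  · intro i _; exact h _ (List.get_mem _ _)

lemma bary_dist {l : List E} {δ : ℝ} (h : ∀ x ∈ l, ∀ y ∈ l, dist x y ≤ δ)
    {v : E} (hv : v ∈ l) : dist v (bary l) ≤ (1 - (l.length : ℝ)⁻¹) * δ := by
  have hp : 0 < l.length := List.length_pos_of_mem hv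
  have key : ∀ t : List E, (∀ x ∈ t, dist v x ≤ δ) → ‖(t.length : ℝ) • v - t.sum‖ ≤ t.length * δ := by
    intro t
    induction t with
    | nil => simp
    | cons a t ih =>
      intro ht
      have h1 := ih (fun x hx => ht x (List.mem_cons_of_mem _ hx))
      have h2 := ht a (by simp)
      rw [dist_eq_norm] at h2
      have : ((a :: t).length : ℝ) • v - (a :: t).sum = (v - a) + ((t.length : ℝ) • v - t.sum) := by
        simp [add_smul]; abel
      rw [this]
      refine (norm_add_le _ _).trans ?_
      simp only [List.length_cons]; push_cast; linarith
  obtain ⟨t1, t2, rfl⟩ := List.append_of_mem hv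
  have hb : (((t1 ++ v :: t2).length : ℝ)) • (v - bary (t1 ++ v :: t2)) =
      ((t1.length : ℝ) • v - t1.sum) + ((t2.length : ℝ) • v - t2.sum) := by
    have hne : ((t1 ++ v :: t2).length : ℝ) ≠ 0 := by exact_mod_cast hp.ne'
    rw [smul_sub, bary, smul_inv_smul₀ hne]
    simp [add_smul]; abel
  have k1 := key t1 (fun x hx => h v hv x (by simp [hx]))
  have k2 := key t2 (fun x hx => h v hv x (by simp [hx]))
  have hn := (congrArg norm hb).le.trans (norm_add_le _ _)
  rw [norm_smul, Real.norm_natCast] at hn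
  have hL : (((t1 ++ v :: t2).length : ℕ) : ℝ) = t1.length + t2.length + 1 := by
    simp; ring
  rw [dist_eq_norm]
  rw [hL] at hn ⊢
  have hpos : (0:ℝ) < t1.length + t2.length + 1 := by positivity
  rw [← mul_le_mul_iff_right₀ hpos]
  have : (t1.length + t2.length + 1 : ℝ) * ((1 - (t1.length + t2.length + 1 : ℝ)⁻¹) * δ)
    = (t1.length + t2.length) * δ := by field_simp; ring
  rw [this]; linarith

def G (k : ℕ) (C : Set E) (δ : ℝ) : Set (List E) :=
  {l | l.length = k ∧ (∀ x ∈ l, x ∈ C) ∧ ∀ x ∈ l, ∀ y ∈ l, dist x y ≤ δ}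

lemma sd_sup (D : ℕ) (δ : ℝ) (hδ : 0 ≤ δ) (k : ℕ) (hk : k ≤ D + 1) : ∀ (C : Set E),
    Convex ℝ C → ∀ l ∈ G k C δ,
    sd k (Finsupp.single l 1) ∈ Sup (G k C ((1 - ((D:ℝ) + 1)⁻¹) * δ)) := by
  induction k with
  | zero =>
    intro C _ l hl
    refine single_sup ?_
    obtain ⟨h1, h2, h3⟩ := hl
    have : l = [] := by simpa using h1
    subst this; simp [G]
  | succ k ih =>
    intro C hC l ⟨h1, h2, h3⟩
    set ρ := (1 - ((D:ℝ) + 1)⁻¹) * δ with hρ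
    have hρ0 : 0 ≤ ρ := by
      apply mul_nonneg _ hδ
      rw [sub_nonneg]
      apply inv_le_one_of_one_le₀; linarith [(Nat.cast_nonneg D : (0:ℝ) ≤ D)]
    rw [sd_single]
    have hl : l ≠ [] := by rintro rfl; simp at h1
    have hC' : Convex ℝ (C ∩ Metric.closedBall (bary l) ρ) := hC.inter (convex_closedBall _ _)
    have hd : ∀ x ∈ l, dist x (bary l) ≤ ρ := by
      intro x hx
      refine (bary_dist h3 hx).trans ?_
      apply mul_le_mul_of_nonneg_right _ hδ
      rw [h1]
      have : ((D:ℝ) + 1)⁻¹ ≤ ((k + 1 : ℕ) : ℝ)⁻¹ := by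
        apply inv_anti₀
        · positivity
        · exact_mod_cast hk
      linarith
    have hb := bdl_sup l
    have := map_sup (sd k) (Sup (G k (C ∩ Metric.closedBall (bary l) ρ) ρ))
      (fun t (ht : t ∈ {t : List E | t.length + 1 = l.length ∧ ∀ x ∈ t, x ∈ l}) =>
        ih (by omega) _ hC' t ⟨by have := ht.1; omega,
          fun x hx => ⟨h2 x (ht.2 x hx), hd x (ht.2 x hx)⟩,
          fun x hx y hy => h3 x (ht.2 x hx) y (ht.2 y hy)⟩) hb
    refine cone_sup _ ?_ this
    rintro t ⟨g1, g2, g3⟩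
    refine ⟨by simp [g1], ?_, ?_⟩
    · intro x hx
      rcases List.mem_cons.1 hx with rfl | hx
      · exact bary_mem hC hl h2
      · exact (g2 x hx).1
    · intro x hx y hy
      rcases List.mem_cons.1 hx with rfl | hx <;> rcases List.mem_cons.1 hy with rfl | hy
      · simpa using hρ0
      · rw [dist_comm]; exact (g2 y hy).2
      · exact (g2 x hx).2
      · exact g3 x hx y hy

def GG (k : ℕ) (K : Set E) (δ : ℝ) : Set (List E) :=
  {l | ∃ C ⊆ K, Convex ℝ C ∧ l ∈ G k C δ}

lemma sd_sup' (D : ℕ) (K : Set E) (δ : ℝ) (hδ : 0 ≤ δ) (k : ℕ) (hk : k ≤ D + 1) {c : Ch E}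
    (hc : c ∈ Sup (GG k K δ)) : sd k c ∈ Sup (GG k K ((1 - ((D:ℝ) + 1)⁻¹) * δ)) := by
  refine map_sup _ _ ?_ hc
  rintro l ⟨C, hCK, hC, hl⟩
  refine sup_mono ?_ (sd_sup D δ hδ k hk C hC l hl)
  exact fun t ht => ⟨C, hCK, hC, ht⟩

end neg


section BU

abbrev EE (d : ℕ) := Fin (d + 1) → ℝ

def Or (d : ℕ) (σ : Fin (d + 1) → ℝ) : Set (EE d) := {x | ∑ i, σ i * x i = 1 ∧ ∀ i, 0 ≤ σ i * x i}

def KK (d : ℕ) : Set (EE d) := {x | ∑ i, |x i| = 1}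

lemma Or_convex (d : ℕ) (σ : Fin (d + 1) → ℝ) : Convex ℝ (Or d σ) := by
  rintro x ⟨hx, hx'⟩ y ⟨hy, hy'⟩ a b ha hb hab
  refine ⟨?_, ?_⟩
  · have : ∑ i, σ i * (a • x + b • y) i = a * ∑ i, σ i * x i + b * ∑ i, σ i * y i := by
      rw [Finset.mul_sum, Finset.mul_sum, ← Finset.sum_add_distrib]
      refine Finset.sum_congr rfl fun i _ => ?_
      simp; ring
    rw [this, hx, hy]; simpa using hab
  · intro i
    have := add_nonneg (mul_nonneg ha (hx' i)) (mul_nonneg hb (hy' i))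
    simp; linarith

lemma Or_sub (d : ℕ) (σ : Fin (d + 1) → ℝ) (hσ : ∀ i, |σ i| = 1) : Or d σ ⊆ KK d := by
  rintro x ⟨hx, hx'⟩
  rw [KK, Set.mem_setOf_eq, ← hx]
  refine Finset.sum_congr rfl fun i _ => ?_
  rw [← abs_of_nonneg (hx' i), abs_mul, hσ, one_mul]

noncomputable def ev (d i : ℕ) : EE d := fun j => if (j : ℕ) = i then 1 else 0

noncomputable def cc (d : ℕ) : ℕ → Ch (EE d)
  | 0 => Finsupp.single [ev d 0] 1
  | k + 1 => cone (ev d (k + 1)) (cc d k + tau (cc d k))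

def CS (d k : ℕ) : Set (List (EE d)) := {l | l.length = k + 1 ∧ ∃ σ : ℕ → ℝ, (∀ i, |σ i| = 1) ∧
  ∀ x ∈ l, ∃ i ≤ k, x = σ i • ev d i}

lemma tau_CS (d k : ℕ) {c : Ch (EE d)} (hc : c ∈ Sup (CS d k)) : tau c ∈ Sup (CS d k) := by
  refine map_sup _ _ ?_ hc
  rintro l ⟨h, σ, hσ, hl⟩
  rw [tau_single]
  refine single_sup ⟨by simpa using h, -σ, by simpa using hσ, ?_⟩
  intro x hx
  obtain ⟨y, hy, rfl⟩ := List.mem_map.1 hx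
  obtain ⟨i, hi, rfl⟩ := hl y hy
  exact ⟨i, hi, by simp⟩

lemma cc_CS (d k : ℕ) : cc d k ∈ Sup (CS d k) := by
  induction k with
  | zero =>
    refine single_sup ⟨by simp, fun _ => 1, by simp, ?_⟩
    intro x hx
    exact ⟨0, le_rfl, by simpa using hx⟩
  | succ k ih =>
    rw [cc]
    refine cone_sup _ ?_ (Submodule.add_mem _ ih (tau_CS d k ih))
    rintro l ⟨h, σ, hσ, hl⟩
    refine ⟨by simp [h], fun i => if i = k + 1 then 1 else σ i, ?_, ?_⟩
    · intro i; dsimp only; split_ifs <;> simp [hσ]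
    · intro x hx
      rcases List.mem_cons.1 hx with rfl | hx
      · exact ⟨k + 1, le_rfl, by simp⟩
      · obtain ⟨i, hi, rfl⟩ := hl x hx
        exact ⟨i, by omega, by dsimp only; rw [if_neg (by omega)]⟩

lemma bd_cc (d k : ℕ) : bd (cc d (k + 1)) = cc d k + tau (cc d k) := by
  have h2 : ∀ c : Ch (EE d), tau (tau c) = c := by
    intro c
    have : tau ∘ₗ tau = (LinearMap.id : Ch (EE d) →ₗ[ZMod 2] Ch (EE d)) := by
      apply lin_ext; intro l; simp [tau_single]
    exact LinearMap.congr_fun this c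
  have h : bd (cc d k + tau (cc d k)) = 0 := by
    cases k with
    | zero =>
      simp [cc, tau_single, bd_single, bdl, ch_two]
    | succ k =>
      rw [map_add, ← tau_bd, bd_cc d k, map_add, h2]
      rw [add_comm (tau _), ch_two]
  rw [cc, bd_cone, h]; simp

lemma KK_dist (d : ℕ) {x y : EE d} (hx : x ∈ KK d) (hy : y ∈ KK d) : dist x y ≤ 2 := by
  have key : ∀ x ∈ KK d, ‖x‖ ≤ 1 := by
    intro x hx
    rw [pi_norm_le_iff_of_nonneg zero_le_one]
    intro i
    rw [← (hx : ∑ i, |x i| = 1), Real.norm_eq_abs]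
    exact Finset.single_le_sum (f := fun i => |x i|) (fun _ _ => abs_nonneg _) (Finset.mem_univ i)
  rw [dist_eq_norm]
  linarith [norm_sub_le x y, key x hx, key y hy]

lemma KK_ne (d : ℕ) {x : EE d} (hx : x ∈ KK d) : x ≠ 0 := by
  rintro rfl; simp [KK] at hx

lemma KK_compact (d : ℕ) : IsCompact (KK d) := by
  apply Metric.isCompact_of_isClosed_isBounded
  · exact isClosed_eq (by fun_prop) continuous_const
  · exact Metric.isBounded_iff.2 ⟨2, fun x hx y hy => KK_dist d hx hy⟩

lemma CS_GG (d k : ℕ) (hk : k ≤ d) : CS d k ⊆ GG (k + 1) (KK d) 2 := by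
  rintro l ⟨h, σ, hσ, hl⟩
  have hO : ∀ x ∈ l, x ∈ Or d (fun i => σ i) := by
    intro x hx
    obtain ⟨i, hi, rfl⟩ := hl x hx
    have e : ∀ j : Fin (d + 1), σ j * (σ i • ev d i) j = if j = ⟨i, by omega⟩ then 1 else 0 := by
      intro j
      simp only [ev, Pi.smul_apply, smul_eq_mul, Fin.ext_iff]
      split_ifs with hj
      · rw [hj, mul_one, ← abs_mul_abs_self, hσ]; simp
      · simp
    refine ⟨?_, ?_⟩
    · rw [Finset.sum_congr rfl (fun j _ => e j)]; simp
    · intro j; rw [e]; split_ifs <;> simp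
  have hK := Or_sub d (fun i => σ i) (fun i => hσ i)
  exact ⟨_, hK, Or_convex d _, h, hO, fun x hx y hy => KK_dist d (hK (hO x hx)) (hK (hO y hy))⟩

noncomputable def sdm (m k : ℕ) {d : ℕ} (c : Ch (EE d)) : Ch (EE d) := (sd k)^[m] c

lemma sdm_GG (d m k : ℕ) (hk : k ≤ d) :
    sdm m (k + 1) (cc d k) ∈ Sup (GG (k + 1) (KK d) ((1 - ((d:ℝ) + 1)⁻¹) ^ m * 2)) := by
  induction m with
  | zero => simpa [sdm] using sup_mono (CS_GG d k hk) (cc_CS d k)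
  | succ m ih =>
    rw [sdm, Function.iterate_succ_apply', pow_succ', mul_assoc]
    refine sd_sup' d _ _ ?_ (k + 1) (by omega) ih
    have : (0:ℝ) ≤ 1 - ((d:ℝ) + 1)⁻¹ := by
      rw [sub_nonneg]
      apply inv_le_one_of_one_le₀; linarith [(Nat.cast_nonneg d : (0:ℝ) ≤ d)]
    positivity

lemma GG_len {d k : ℕ} {K : Set (EE d)} {δ : ℝ} : GG k K δ ⊆ {l | l.length = k} := by
  rintro l ⟨C, -, -, h, -⟩; exact h

lemma bd_sdm (d m k : ℕ) (hk : k + 1 ≤ d) : bd (sdm m (k + 2) (cc d (k + 1))) =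
    sdm m (k + 1) (cc d k) + tau (sdm m (k + 1) (cc d k)) := by
  induction m with
  | zero => simpa [sdm] using bd_cc d k
  | succ m ih =>
    rw [sdm, sdm, Function.iterate_succ_apply', Function.iterate_succ_apply']
    have := bd_sd (k + 1) (sup_mono GG_len (sdm_GG d m (k + 1) hk))
    rw [sdm] at this ih
    rw [this, ih, tau_sd, ← map_add]
    rfl

lemma W_sdm (d m : ℕ) (s : ℕ → EE d → ZMod 2) (hs : ∀ i x, x ≠ 0 → s i (-x) = s i x + 1)
    (k : ℕ) (hk : k ≤ d) : W s (sdm m (k + 1) (cc d k)) = 1 := by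
  induction k with
  | zero =>
    have : sdm m (0 + 1) (cc d 0) = cc d 0 := by
      apply Function.iterate_fixed
      rw [cc, sd_single]
      simp [bdl, sd, cone_single, bary]
    rw [this, cc, W_single, Wl]
  | succ k ih =>
    rw [W_eq_P_bd s k (sup_mono GG_len (sdm_GG d m (k + 1) hk)), bd_sdm d m k hk, P_tau s hs, 
      ih (by omega)]
    refine sup_mono ?_ (sdm_GG d m k (by omega))
    rintro l ⟨C, hC, -, -, h, -⟩ x hx
    exact KK_ne d (hC (h x hx))

lemma exists_simplex (d m : ℕ) (s : ℕ → EE d → ZMod 2) (hs : ∀ i x, x ≠ 0 → s i (-x) = s i x + 1) :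
    ∃ l : List (EE d), l ∈ GG (d + 1) (KK d) ((1 - ((d:ℝ) + 1)⁻¹) ^ m * 2) ∧
      ∀ i < d, ∃ a ∈ l, ∃ b ∈ l, s i a ≠ s i b := by
  by_contra hcon
  push Not at hcon
  have h1 := W_sdm d m s hs d le_rfl
  have h2 := map_sup (W s) ⊥ (fun l hl => ?_) (sdm_GG d m d le_rfl)
  · rw [Submodule.mem_bot] at h2
    rw [h2] at h1; simp at h1
  · rw [Submodule.mem_bot, W_single]
    by_contra hne
    obtain ⟨i, hi, h⟩ := hcon l hl
    obtain ⟨a, ha, b, hb, hab⟩ := Wl_ne s d (GG_len hl) hne i hi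
    exact hab (h a ha b hb)

open Classical in
lemma exists_sign (d : ℕ) (g : ℕ → EE d → ℝ) (hodd : ∀ i x, g i (-x) = - g i x) :
    ∃ s : ℕ → EE d → ZMod 2, (∀ i x, x ≠ 0 → s i (-x) = s i x + 1) ∧
      ∀ i x y, s i x ≠ s i y → g i x * g i y ≤ 0 := by
  refine ⟨fun i x => if 0 < g i x then 1 else if g i x < 0 then 0 else
    if WellOrderingRel x (-x) then 1 else 0, ?_, ?_⟩
  · intro i x hx
    have hne : x ≠ -x := by
      intro h; exact hx (self_eq_neg.1 h)
    dsimp only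
    rw [hodd]
    rcases lt_trichotomy (g i x) 0 with h | h | h
    · simp [h, h.not_gt]
    · simp only [h, neg_zero, lt_irrefl, if_false, neg_neg]
      rcases trichotomous_of WellOrderingRel x (-x) with h1 | h1 | h1
      · have : ¬ WellOrderingRel (-x) x := fun h2 => asymm_of WellOrderingRel h1 h2
        simp [h1, this]; decide
      · exact absurd h1 hne
      · have : ¬ WellOrderingRel x (-x) := fun h2 => asymm_of WellOrderingRel h1 h2
        simp [h1, this]
    · simp [h, h.not_gt]; decide
  · intro i x y h
    by_contra hpos
    push Not at hpos
    apply h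
    rcases mul_pos_iff.1 hpos with ⟨h1, h2⟩ | ⟨h1, h2⟩
    · simp [h1, h2]
    · simp [h1, h2, h1.not_gt, h2.not_gt]

open Filter Topology in
theorem borsuk_ulam (d : ℕ) (g : ℕ → EE d → ℝ) (hodd : ∀ i x, g i (-x) = - g i x)
    (hc : ∀ i x, x ≠ 0 → ContinuousAt (g i) x) : ∃ x ≠ 0, ∀ i < d, g i x = 0 := by
  obtain ⟨s, hs, hsg⟩ := exists_sign d g hodd
  choose l hl hl' using fun m => exists_simplex d m s hs
  have hlen : ∀ m, (l m).length = d + 1 := fun m => GG_len (hl m)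
  have hne : ∀ m, ∃ v, v ∈ l m := fun m => by
    apply List.exists_mem_of_length_pos; rw [hlen]; omega
  choose v hv using hne
  have hK : ∀ m, ∀ x ∈ l m, x ∈ KK d := by
    intro m x hx
    obtain ⟨C, hC, -, -, h, -⟩ := hl m
    exact hC (h x hx)
  have hdist : ∀ m, ∀ x ∈ l m, ∀ y ∈ l m, dist x y ≤ (1 - ((d:ℝ) + 1)⁻¹) ^ m * 2 := by
    intro m
    obtain ⟨C, hC, -, -, -, h⟩ := hl m
    exact h
  have hto : Tendsto (fun m : ℕ => (1 - ((d:ℝ) + 1)⁻¹) ^ m * 2) atTop (𝓝 0) := by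
    have hp : (0:ℝ) < ((d:ℝ) + 1)⁻¹ := by positivity
    have hp' : ((d:ℝ) + 1)⁻¹ ≤ 1 := by
      apply inv_le_one_of_one_le₀; linarith [(Nat.cast_nonneg d : (0:ℝ) ≤ d)]
    simpa using (tendsto_pow_atTop_nhds_zero_of_lt_one (by linarith)
      (by linarith : (1 - ((d:ℝ) + 1)⁻¹) < 1)).mul_const 2
  obtain ⟨x, hx, φ, hφ, hlim⟩ := (KK_compact d).tendsto_subseq (fun m => hK m _ (hv m))
  refine ⟨x, KK_ne d hx, fun i hi => ?_⟩
  choose a ha b hb hab using fun m => hl' m i hi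
  have hcl : ∀ u : ℕ → EE d, (∀ m, u m ∈ l m) → Tendsto (fun m => g i (u (φ m))) atTop (𝓝 (g i x)) := by
    intro u hu
    refine (hc i x (KK_ne d hx)).tendsto.comp ?_
    refine hlim.congr_dist ?_
    refine squeeze_zero (fun _ => dist_nonneg) (fun m => hdist _ _ (hv _) _ (hu _)) ?_
    exact hto.comp hφ.tendsto_atTop
  have h := (hcl a ha).mul (hcl b hb)
  have h2 : g i x * g i x ≤ 0 := le_of_tendsto' h (fun m => hsg i _ _ (hab _))
  nlinarith [mul_self_nonneg (g i x), mul_self_eq_zero.1 (le_antisymm h2 (mul_self_nonneg (g i x)))]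

end BU

end LL

namespace LL
section blaschke
open Complex ComplexConjugate Filter Topology
open scoped ContDiff

noncomputable def ez (x : ℝ) : ℂ := circleMap 0 1 (2 * Real.pi * x)

noncomputable def mob (γ v : ℂ) : ℂ := (γ + v) / (1 + conj γ * v)

noncomputable def NN (n : ℕ) (w : ℕ → ℂ) : ℝ := ∑ i ∈ Finset.range n, ‖w i‖

noncomputable def gam (n : ℕ) (w : ℕ → ℂ) : ℂ := w n / (NN (n + 1) w : ℂ)

open Classical in
noncomputable def H : ℕ → (ℕ → ℂ) → ℂ → ℂ
  | 0 => fun _ _ => 0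
  | n + 1 => fun w z => if NN n w = 0 then gam n w else mob (gam n w) (z * H n w z)

lemma H_zero (n : ℕ) (w : ℕ → ℂ) (h : NN n w = 0) : H (n + 1) w = fun _ => gam n w := by
  ext z; simp [H, h]

lemma H_ne (n : ℕ) (w : ℕ → ℂ) (h : NN n w ≠ 0) :
    H (n + 1) w = fun z => mob (gam n w) (z * H n w z) := by
  ext z; simp [H, h]

lemma NN_nonneg (n : ℕ) (w : ℕ → ℂ) : 0 ≤ NN n w := Finset.sum_nonneg fun _ _ => norm_nonneg _

lemma NN_succ (n : ℕ) (w : ℕ → ℂ) : NN (n + 1) w = NN n w + ‖w n‖ := Finset.sum_range_succ _ _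

lemma NN_neg (n : ℕ) (w : ℕ → ℂ) : NN n (-w) = NN n w := by simp [NN]

lemma NN_cont (n : ℕ) : Continuous (NN n) := by unfold NN; fun_prop

lemma norm_gam (n : ℕ) (w : ℕ → ℂ) : ‖gam n w‖ = ‖w n‖ / NN (n + 1) w := by
  rw [gam, norm_div, Complex.norm_real, Real.norm_of_nonneg (NN_nonneg _ _)]

lemma NN_succ_ne {n : ℕ} {w : ℕ → ℂ} (h : NN n w ≠ 0) : NN (n + 1) w ≠ 0 := by
  have := lt_of_le_of_ne (NN_nonneg n w) h.symm
  rw [NN_succ]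
  positivity

lemma gam_lt {n : ℕ} {w : ℕ → ℂ} (h : NN n w ≠ 0) : ‖gam n w‖ < 1 := by
  have h1 := lt_of_le_of_ne (NN_nonneg n w) h.symm
  have h2 := lt_of_le_of_ne (NN_nonneg _ w) (NN_succ_ne h).symm
  rw [norm_gam, div_lt_one h2, NN_succ]
  linarith

lemma gam_eq {n : ℕ} {w : ℕ → ℂ} (h : NN n w = 0) (h' : NN (n + 1) w ≠ 0) : ‖gam n w‖ = 1 := by
  rw [norm_gam]
  rw [NN_succ, h, zero_add] at *
  exact div_self h'

lemma gam_cont {n : ℕ} {w : ℕ → ℂ} (h : NN (n + 1) w ≠ 0) : ContinuousAt (gam n) w := by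
  unfold gam
  apply ContinuousAt.div
  · exact (continuous_apply n).continuousAt
  · exact (continuous_ofReal.comp (NN_cont _)).continuousAt
  · exact_mod_cast h

lemma gam_neg (n : ℕ) (w : ℕ → ℂ) : gam n (-w) = - gam n w := by
  simp [gam, NN_neg, neg_div]

lemma H_neg (n : ℕ) (w : ℕ → ℂ) (z : ℂ) : H n (-w) z = - H n w z := by
  induction n with
  | zero => simp [H]
  | succ n ih =>
    by_cases h : NN n w = 0
    · rw [H_zero n w h, H_zero n (-w) (by rwa [NN_neg]), gam_neg]
    · rw [H_ne n w h, H_ne n (-w) (by rwa [NN_neg]), gam_neg]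
      simp only [ih, mob]
      rw [← neg_div]
      congr 1
      · ring
      · simp

lemma den_bound {γ v : ℂ} {r : ℝ} (h : ‖γ‖ ≤ r) (hv : ‖v‖ ≤ 1) : 1 - r ≤ ‖1 + conj γ * v‖ := by
  have h1 : ‖conj γ * v‖ ≤ r := by
    rw [norm_mul, RCLike.norm_conj]
    nlinarith [norm_nonneg γ, norm_nonneg v]
  have h2 := norm_sub_norm_le (1:ℂ) (-(conj γ * v))
  rw [norm_neg, sub_neg_eq_add, norm_one] at h2
  linarith

lemma den_ne {γ v : ℂ} (h : ‖γ‖ < 1) (hv : ‖v‖ ≤ 1) : 1 + conj γ * v ≠ 0 := by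
  have := den_bound le_rfl hv (γ := γ)
  rw [← norm_pos_iff]; linarith

lemma mob_id (γ v : ℂ) : normSq (1 + conj γ * v) - normSq (γ + v) =
    (1 - normSq γ) * (1 - normSq v) := by
  simp [normSq_apply]; ring

lemma mob_le {γ v : ℂ} (h : ‖γ‖ < 1) (hv : ‖v‖ ≤ 1) : ‖mob γ v‖ ≤ 1 := by
  have hd := norm_pos_iff.2 (den_ne h hv)
  rw [mob, norm_div, div_le_one hd]
  have := mob_id γ v
  simp only [normSq_eq_norm_sq] at this
  have h1 : 0 ≤ (1 - ‖γ‖ ^ 2) * (1 - ‖v‖ ^ 2) := by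
    apply mul_nonneg <;> nlinarith [norm_nonneg γ, norm_nonneg v]
  apply le_of_sq_le_sq _ hd.le
  linarith

lemma mob_eq {γ v : ℂ} (h : ‖γ‖ < 1) (hv : ‖v‖ = 1) : ‖mob γ v‖ = 1 := by
  have hd := norm_pos_iff.2 (den_ne h hv.le)
  rw [mob, norm_div, div_eq_one_iff_eq hd.ne']
  have := mob_id γ v
  simp only [normSq_eq_norm_sq, hv] at this
  rw [← sq_eq_sq₀ (norm_nonneg _) hd.le]
  linarith

lemma H_diff (n : ℕ) (w : ℕ → ℂ) (h : NN n w ≠ 0) : ∀ z : ℂ, ‖z‖ ≤ 1 →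
    ‖H n w z‖ ≤ 1 ∧ DifferentiableAt ℂ (H n w) z := by
  induction n with
  | zero => simp [NN] at h
  | succ n ih =>
    intro z hz
    by_cases h0 : NN n w = 0
    · rw [H_zero n w h0]
      exact ⟨(gam_eq h0 h).le, by fun_prop⟩
    · obtain ⟨h1, h2⟩ := ih h0 z hz
      rw [H_ne n w h0]
      have h3 : ‖z * H n w z‖ ≤ 1 := by
        rw [norm_mul]; nlinarith [norm_nonneg z, norm_nonneg (H n w z)]
      refine ⟨mob_le (gam_lt h0) h3, ?_⟩
      unfold mob
      apply DifferentiableAt.div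
      · fun_prop
      · fun_prop
      · exact den_ne (gam_lt h0) h3

lemma norm_ez (x : ℝ) : ‖ez x‖ = 1 := by simp [ez]

lemma ez_cd : ContDiff ℝ ∞ ez := by
  unfold ez
  exact (contDiff_circleMap 0 1).comp (by fun_prop)

lemma ez_deriv (x : ℝ) : HasDerivAt ez (I * (2 * Real.pi : ℝ) * ez x) x := by
  have h1 := (hasDerivAt_circleMap 0 1 (2 * Real.pi * x)).scomp x
    ((hasDerivAt_id x).const_mul (2 * Real.pi))
  refine h1.congr_deriv ?_
  simp [ez]; ring

lemma ez_one : ez 1 = ez 0 := by simp [ez, circleMap]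

def Good (h : ℝ → ℂ) (B : ℝ) : Prop := ContDiff ℝ ∞ h ∧ (∀ x, ‖h x‖ = 1) ∧ h 1 = h 0 ∧
  ∃ k : ℝ → ℝ, Continuous k ∧ (∀ x, 0 ≤ k x) ∧ (∀ x, HasDerivAt h (I * k x * h x) x) ∧
    ∫ x in (0:ℝ)..1, k x ≤ B

lemma alg1 (v : ℂ) (h : 1 + v ≠ 0) :
    (1 - ‖v‖ ^ 2) / ‖1 + v‖ ^ 2 = 1 - 2 * (v / (1 + v)).re := by
  have h1 : normSq (1 + v) ≠ 0 := by simpa using h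
  rw [← normSq_eq_norm_sq, ← normSq_eq_norm_sq, div_re]
  field_simp
  simp [normSq_apply]; ring

lemma alg2 (a γ u ub κ : ℂ) (h3 : u * ub = 1) (h1 : 1 + a * u ≠ 0) (h4 : 1 + γ * ub ≠ 0) :
    (I * κ * u * (1 + a * u) - (γ + u) * (a * (I * κ * u))) / (1 + a * u) ^ 2 =
      I * (κ * ((1 - a * γ) / ((1 + a * u) * (1 + γ * ub)))) * ((γ + u) / (1 + a * u)) := by
  have h5 : γ + u = u * (1 + γ * ub) := by linear_combination (-γ) * h3
  have h6 : I * κ * u * (1 + a * u) - (γ + u) * (a * (I * κ * u)) = I * κ * u * (1 - a * γ) := by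
    ring
  rw [h6, h5]
  generalize 1 + a * u = p at *
  generalize 1 + γ * ub = q at *
  field_simp

lemma good_step {h : ℝ → ℂ} {B : ℝ} (hg : Good h B) {γ : ℂ} (hγ : ‖γ‖ < 1) :
    Good (fun x => mob γ (ez x * h x)) (B + 2 * Real.pi) := by
  obtain ⟨hcd, hn, hper, k, hk, hk0, hd, hB⟩ := hg
  set u : ℝ → ℂ := fun x => ez x * h x with hu
  have hun : ∀ x, ‖u x‖ = 1 := fun x => by simp [hu, hn, norm_ez]
  have hden : ∀ x, 1 + conj γ * u x ≠ 0 := fun x => den_ne hγ (hun x).le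
  have hucd : ContDiff ℝ ∞ u := ez_cd.mul hcd
  set κ : ℝ → ℝ := fun x => 2 * Real.pi + k x with hκ
  have hκc : Continuous κ := by fun_prop
  have hud : ∀ x, HasDerivAt u (I * κ x * u x) x := by
    intro x
    refine ((ez_deriv x).mul (hd x)).congr_deriv ?_
    simp [hu, hκ]; ring
  have hup : u 1 = u 0 := by simp [hu, ez_one, hper]
  have hvn : ∀ x, ‖conj γ * u x‖ = ‖γ‖ := fun x => by simp [hun]
  -- the log
  have hslit : ∀ x, 1 + conj γ * u x ∈ slitPlane := fun x =>
    mem_slitPlane_of_norm_lt_one (by rw [hvn]; exact hγ)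
  have hL : ∀ x, HasDerivAt (fun x => Complex.log (1 + conj γ * u x))
      (conj γ * (I * κ x * u x) / (1 + conj γ * u x)) x := by
    intro x
    exact (((hud x).const_mul (conj γ)).const_add 1).clog_real (hslit x)
  have hL0 : ∫ x in (0:ℝ)..1, conj γ * (I * κ x * u x) / (1 + conj γ * u x) = 0 := by
    rw [intervalIntegral.integral_eq_sub_of_hasDerivAt (fun x _ => hL x)]
    · simp [hup]
    · apply Continuous.intervalIntegrable
      exact Continuous.div (by have := hucd.continuous; fun_prop)
        (by have := hucd.continuous; fun_prop) hden
  refine ⟨?_, fun x => mob_eq hγ (hun x), by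
      change mob γ (u 1) = mob γ (u 0); rw [hup],
    fun x => κ x * ((1 - ‖γ‖ ^ 2) / ‖1 + conj γ * u x‖ ^ 2), ?_, ?_, ?_, ?_⟩
  · unfold mob
    simp only [div_eq_mul_inv]
    exact (contDiff_const.add hucd).mul ((contDiff_const.add (contDiff_const.mul hucd)).inv hden)
  · have := hucd.continuous
    refine hκc.mul (Continuous.div (by fun_prop) (by fun_prop) ?_)
    intro x
    have := norm_pos_iff.2 (hden x)
    positivity
  · intro x
    have h1 : 0 ≤ κ x := add_nonneg (by positivity) (hk0 x)
    have h2 : 0 ≤ 1 - ‖γ‖ ^ 2 := by nlinarith [norm_nonneg γ]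
    positivity
  · intro x
    have h1 : HasDerivAt (fun x => mob γ (u x)) _ x :=
      ((hud x).const_add γ).div (((hud x).const_mul (conj γ)).const_add 1) (hden x)
    refine h1.congr_deriv ?_
    have h2 : (((1 - ‖γ‖ ^ 2) / ‖1 + conj γ * u x‖ ^ 2 : ℝ) : ℂ) =
        (1 - conj γ * γ) / ((1 + conj γ * u x) * (1 + γ * conj (u x))) := by
      push_cast
      rw [← conj_mul', ← mul_conj']
      simp
    have h3 : u x * conj (u x) = 1 := by rw [mul_conj', hun]; simp
    have h4 : 1 + γ * conj (u x) ≠ 0 := by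
      have := (map_ne_zero (starRingEnd ℂ)).2 (hden x)
      simpa using this
    change _ = I * ((κ x * ((1 - ‖γ‖ ^ 2) / ‖1 + conj γ * u x‖ ^ 2) : ℝ) : ℂ) * mob γ (u x)
    rw [ofReal_mul, h2, mob]
    exact alg2 _ _ _ _ _ h3 (hden x) h4
  · have e : ∀ x, κ x * ((1 - ‖γ‖ ^ 2) / ‖1 + conj γ * u x‖ ^ 2) =
        κ x - 2 * (conj γ * (I * κ x * u x) / (1 + conj γ * u x)).im := by
      intro x
      rw [← hvn x, alg1 _ (hden x)]
      have : conj γ * (I * κ x * u x) / (1 + conj γ * u x) =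
        (κ x : ℂ) * (I * ((conj γ * u x) / (1 + conj γ * u x))) := by ring
      rw [this, im_ofReal_mul, I_mul_im]
      ring
    have hc : Continuous (fun x => conj γ * (I * κ x * u x) / (1 + conj γ * u x)) :=
      Continuous.div (by have := hucd.continuous; fun_prop)
        (by have := hucd.continuous; fun_prop) hden
    have him : ∫ x in (0:ℝ)..1, (conj γ * (I * κ x * u x) / (1 + conj γ * u x)).im = 0 := by
      have := imCLM.intervalIntegral_comp_comm (Continuous.intervalIntegrable (μ := volume) hc 0 1)
      simp only [imCLM_apply, hL0] at this
      simpa using this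
    simp only [e]
    have hci : Continuous (fun x => 2 * (conj γ * (I * κ x * u x) / (1 + conj γ * u x)).im) :=
      continuous_const.mul (continuous_im.comp hc)
    rw [intervalIntegral.integral_sub (hκc.intervalIntegrable _ _) (hci.intervalIntegrable _ _),
      intervalIntegral.integral_const_mul, him]
    simp only [hκ]
    rw [intervalIntegral.integral_add (by simp) (hk.intervalIntegrable _ _)]
    simp
    linarith

lemma H_good (n : ℕ) (w : ℕ → ℂ) (h : NN (n + 1) w ≠ 0) :
    Good (fun x => H (n + 1) w (ez x)) (2 * Real.pi * n) := by
  have key : ∀ n, NN n w = 0 → NN (n + 1) w ≠ 0 →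
      Good (fun x => H (n + 1) w (ez x)) (2 * Real.pi * n) := by
    intro n h0 h
    rw [H_zero n w h0]
    refine ⟨contDiff_const, fun _ => gam_eq h0 h, rfl, fun _ => 0, by fun_prop, by simp, ?_, ?_⟩
    · intro x; simpa using hasDerivAt_const x (gam n w)
    · simp; positivity
  induction n with
  | zero => exact key 0 (by simp [NN]) h
  | succ n ih =>
    by_cases h0 : NN (n + 1) w = 0
    · exact key _ h0 h
    · have := good_step (ih h0) (gam_lt h0)
      rw [H_ne _ w h0]
      convert this using 1
      push_cast; ring

lemma H_unit (n : ℕ) (w : ℕ → ℂ) (h : NN n w ≠ 0) (x : ℝ) : ‖H n w (ez x)‖ = 1 := by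
  cases n with
  | zero => simp [NN] at h
  | succ n => exact (H_good n w h).2.1 x

lemma H_cont_x (n : ℕ) (w : ℕ → ℂ) : Continuous (fun x => H n w (ez x)) := by
  cases n with
  | zero => simp [H]; fun_prop
  | succ n =>
    by_cases h : NN (n + 1) w = 0
    · rw [H_zero n w]
      · fun_prop
      · have := NN_nonneg n w
        rw [NN_succ] at h
        linarith [norm_nonneg (w n)]
    · exact (H_good n w h).1.continuous

lemma H_mean (n : ℕ) (w : ℕ → ℂ) (h : NN n w ≠ 0) :
    ∫ x in (0:ℝ)..1, H (n + 1) w (ez x) = gam n w := by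
  have h1 : DiffContOnCl ℂ (H (n + 1) w) (Metric.ball 0 |1|) := by
    apply DifferentiableOn.diffContOnCl
    intro z hz
    rw [abs_one, closure_ball _ one_ne_zero] at hz
    exact (H_diff (n + 1) w (NN_succ_ne h) z (by simpa using hz)).2.differentiableWithinAt
  have h2 := h1.circleAverage
  rw [Real.circleAverage_def] at h2
  have h3 := intervalIntegral.integral_comp_mul_left (a := 0) (b := 1)
    (fun θ => H (n + 1) w (circleMap 0 1 θ)) (c := 2 * Real.pi) (by positivity)
  simp only [mul_zero, mul_one] at h3
  simp only [ez]
  rw [h3, h2, H_ne n w h]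
  simp [mob]

lemma H_L2 (n : ℕ) (w : ℕ → ℂ) (h : NN (n + 1) w ≠ 0) :
    ∫ x in (0:ℝ)..1, ‖H (n + 1) w (ez x) - gam n w‖ ^ 2 = 1 - ‖gam n w‖ ^ 2 := by
  by_cases h0 : NN n w = 0
  · rw [H_zero n w h0, gam_eq h0 h]; simp
  · have hm := H_mean n w h0
    have hc := H_cont_x (n + 1) w
    have e : ∀ x, ‖H (n + 1) w (ez x) - gam n w‖ ^ 2 =
        (1 + ‖gam n w‖ ^ 2) - 2 * (conj (gam n w) * H (n + 1) w (ez x)).re := by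
      intro x
      have h1 := H_unit (n + 1) w h x
      rw [← normSq_eq_norm_sq, normSq_sub, normSq_eq_norm_sq, h1, normSq_eq_norm_sq, mul_comm (conj _)]
      simp
    have hre : ∫ x in (0:ℝ)..1, (conj (gam n w) * H (n + 1) w (ez x)).re = ‖gam n w‖ ^ 2 := by
      have hc2 : Continuous fun x => conj (gam n w) * H (n + 1) w (ez x) := continuous_const.mul hc
      have := reCLM.intervalIntegral_comp_comm
        (Continuous.intervalIntegrable (μ := volume) hc2 0 1)
      rw [intervalIntegral.integral_const_mul, hm, conj_mul'] at this
      simp only [reCLM_apply] at this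
      rw [this]; norm_cast
    simp only [e]
    rw [intervalIntegral.integral_sub (by simp) (Continuous.intervalIntegrable (by fun_prop) _ _),
      intervalIntegral.integral_const_mul, hre]
    simp; ring

lemma mob_lip {γ γ0 v v0 : ℂ} {r : ℝ} (hr : r < 1) (h : ‖γ‖ ≤ r) (h0 : ‖γ0‖ ≤ r) (hv : ‖v‖ = 1)
    (hv0 : ‖v0‖ = 1) : ‖mob γ v - mob γ0 v0‖ ^ 2 ≤
      32 / (1 - r) ^ 4 * (‖γ - γ0‖ ^ 2 + ‖v - v0‖ ^ 2) := by
  have d1 := den_bound h hv.le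
  have d2 := den_bound h0 hv0.le
  have hr' : 0 < 1 - r := by linarith
  have n1 : 1 + conj γ * v ≠ 0 := norm_pos_iff.1 (by linarith)
  have n2 : 1 + conj γ0 * v0 ≠ 0 := norm_pos_iff.1 (by linarith)
  have e : mob γ v - mob γ0 v0 = (((γ - γ0) + (v - v0)) * (1 + conj γ0 * v0) -
     (γ0 + v0) * (conj (γ - γ0) * v + conj γ0 * (v - v0))) /
      ((1 + conj γ * v) * (1 + conj γ0 * v0)) := by
    rw [mob, mob, map_sub, div_sub_div _ _ n1 n2]; congr 1; ring
  have b1 : ‖((γ - γ0) + (v - v0)) * (1 + conj γ0 * v0) -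
     (γ0 + v0) * (conj (γ - γ0) * v + conj γ0 * (v - v0))‖ ≤ 4 * (‖γ - γ0‖ + ‖v - v0‖) := by
    have a1 := norm_add_le (γ - γ0) (v - v0)
    have a2 : ‖1 + conj γ0 * v0‖ ≤ 2 := by
      refine (norm_add_le _ _).trans ?_
      rw [norm_mul, RCLike.norm_conj, hv0, norm_one]; linarith
    have a3 : ‖γ0 + v0‖ ≤ 2 := by
      refine (norm_add_le _ _).trans ?_
      rw [hv0]; linarith
    have a4 : ‖conj (γ - γ0) * v + conj γ0 * (v - v0)‖ ≤ ‖γ - γ0‖ + ‖v - v0‖ := by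
      refine (norm_add_le _ _).trans ?_
      rw [norm_mul, norm_mul, RCLike.norm_conj, RCLike.norm_conj, hv]
      nlinarith [norm_nonneg (v - v0)]
    refine (norm_sub_le _ _).trans ?_
    rw [norm_mul, norm_mul]
    have := mul_le_mul a1 a2 (norm_nonneg _) (by positivity)
    have := mul_le_mul a3 a4 (norm_nonneg _) (by norm_num)
    linarith
  have b2 : (1 - r) ^ 2 ≤ ‖(1 + conj γ * v) * (1 + conj γ0 * v0)‖ := by
    rw [norm_mul, sq]
    exact mul_le_mul d1 d2 hr'.le (norm_nonneg _)
  have b3 : ‖mob γ v - mob γ0 v0‖ ≤ 4 * (‖γ - γ0‖ + ‖v - v0‖) / (1 - r) ^ 2 := by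
    rw [e, norm_div]
    exact div_le_div₀ (by positivity) b1 (by positivity) b2
  calc _ ≤ (4 * (‖γ - γ0‖ + ‖v - v0‖) / (1 - r) ^ 2) ^ 2 := by gcongr
    _ = 16 / (1 - r) ^ 4 * (‖γ - γ0‖ + ‖v - v0‖) ^ 2 := by
      rw [div_pow, mul_pow, ← pow_mul]; norm_num; rw [mul_div_right_comm]
    _ ≤ 16 / (1 - r) ^ 4 * (2 * (‖γ - γ0‖ ^ 2 + ‖v - v0‖ ^ 2)) := by
      gcongr
      nlinarith [sq_nonneg (‖γ - γ0‖ - ‖v - v0‖)]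
    _ = _ := by ring

lemma int_le {p q : ℝ → ℝ} (hp : Continuous p) (hq : Continuous q) (h : ∀ x, p x ≤ q x) :
    ∫ x in (0:ℝ)..1, p x ≤ ∫ x in (0:ℝ)..1, q x :=
  intervalIntegral.integral_mono_on zero_le_one (hp.intervalIntegrable _ _)
    (hq.intervalIntegrable _ _) (fun x _ => h x)

lemma H_cont (n : ℕ) (w0 : ℕ → ℂ) (h : NN n w0 ≠ 0) :
    Tendsto (fun w => ∫ x in (0:ℝ)..1, ‖H n w (ez x) - H n w0 (ez x)‖ ^ 2) (𝓝 w0) (𝓝 0) := by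
  induction n with
  | zero => simp [NN] at h
  | succ n ih =>
    have hne : ∀ n, NN n w0 ≠ 0 → ∀ᶠ w in 𝓝 w0, NN n w ≠ 0 := fun n h =>
      (NN_cont n).continuousAt.eventually_ne h
    have hnn : ∀ w, 0 ≤ ∫ x in (0:ℝ)..1, ‖H (n + 1) w (ez x) - H (n + 1) w0 (ez x)‖ ^ 2 := fun w =>
      intervalIntegral.integral_nonneg zero_le_one (fun x _ => by positivity)
    have hg := (gam_cont h).tendsto
    have hg0 : Tendsto (fun w => ‖gam n w - gam n w0‖ ^ 2) (𝓝 w0) (𝓝 0) := by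
      have := ((hg.sub_const (gam n w0)).norm).pow 2
      simpa using this
    by_cases h0 : NN n w0 = 0
    · have hw1 := gam_eq h0 h
      have hb : Tendsto (fun w => 2 * (1 - ‖gam n w‖ ^ 2) + 2 * ‖gam n w - gam n w0‖ ^ 2)
          (𝓝 w0) (𝓝 0) := by
        have := (((hg.norm.pow 2).const_sub 1).const_mul 2).add (hg0.const_mul 2)
        simpa [hw1] using this
      refine squeeze_zero' (Eventually.of_forall hnn) ?_ hb
      filter_upwards [hne _ h] with w hw
      have hc := H_cont_x (n + 1) w
      rw [← H_L2 n w hw, H_zero n w0 h0]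
      have : 2 * (∫ x in (0:ℝ)..1, ‖H (n + 1) w (ez x) - gam n w‖ ^ 2) + 
          2 * ‖gam n w - gam n w0‖ ^ 2 = ∫ x in (0:ℝ)..1,
          (2 * ‖H (n + 1) w (ez x) - gam n w‖ ^ 2 + 2 * ‖gam n w - gam n w0‖ ^ 2) := by
        rw [intervalIntegral.integral_add (Continuous.intervalIntegrable (by fun_prop) _ _) (by simp),
          intervalIntegral.integral_const_mul]
        simp
      rw [this]
      refine int_le (by fun_prop) (by fun_prop) fun x => ?_
      have t := norm_add_le (H (n + 1) w (ez x) - gam n w) (gam n w - gam n w0)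
      rw [sub_add_sub_cancel] at t
      nlinarith [sq_nonneg (‖H (n + 1) w (ez x) - gam n w‖ - ‖gam n w - gam n w0‖), 
        norm_nonneg (H (n + 1) w (ez x) - gam n w0)]
    · obtain ⟨r, hr1, hr2⟩ := exists_between (gam_lt h0)
      have hb := ((hg0.add (ih h0)).const_mul (32 / (1 - r) ^ 4))
      rw [add_zero, mul_zero] at hb
      refine squeeze_zero' (Eventually.of_forall hnn) ?_ hb
      filter_upwards [hne _ h0, hg.norm.eventually_lt_const hr1] with w hw hwr
      have c1 := H_cont_x n w
      have c2 := H_cont_x n w0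
      have c3 := H_cont_x (n + 1) w
      have c4 := H_cont_x (n + 1) w0
      have : 32 / (1 - r) ^ 4 * (‖gam n w - gam n w0‖ ^ 2 + 
          ∫ x in (0:ℝ)..1, ‖H n w (ez x) - H n w0 (ez x)‖ ^ 2) = ∫ x in (0:ℝ)..1,
          32 / (1 - r) ^ 4 * (‖gam n w - gam n w0‖ ^ 2 + ‖H n w (ez x) - H n w0 (ez x)‖ ^ 2) := by
        rw [intervalIntegral.integral_const_mul, intervalIntegral.integral_add (by simp)
          (Continuous.intervalIntegrable (by fun_prop) _ _)]
        simp
      rw [this]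
      refine int_le (by fun_prop) (by fun_prop) fun x => ?_
      rw [H_ne n w hw, H_ne n w0 h0]
      refine (mob_lip hr2 hwr.le hr1.le ?_ ?_).trans_eq ?_
      · rw [norm_mul, norm_ez, H_unit n w hw, one_mul]
      · rw [norm_mul, norm_ez, H_unit n w0 h0, one_mul]
      · rw [← mul_sub, norm_mul, norm_ez, one_mul]

lemma H_le (n : ℕ) (w : ℕ → ℂ) (x : ℝ) : ‖H n w (ez x)‖ ≤ 1 := by
  by_cases h : NN n w = 0
  · cases n with
    | zero => simp [H]
    | succ n =>
      have h1 : NN n w = 0 := by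
        have := NN_nonneg n w
        rw [NN_succ] at h
        linarith [norm_nonneg (w n)]
      rw [H_zero n w h1, norm_gam, h]; simp
  · exact (H_unit n w h x).le

lemma F_cont (n : ℕ) (w0 : ℕ → ℂ) (h : NN n w0 ≠ 0) (f : ℝ → ℂ)
    (hf : IntegrableOn f (Set.Ioc 0 1)) :
    Tendsto (fun w => ∫ x in (0:ℝ)..1, f x * H n w (ez x)) (𝓝 w0)
      (𝓝 (∫ x in (0:ℝ)..1, f x * H n w0 (ez x))) := by
  apply tendsto_of_subseq_tendsto
  intro ns hns
  have h1 := (H_cont n w0 h).comp hns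
  set μ := volume.restrict (Set.Ioc (0:ℝ) 1) with hμ
  have hm : TendstoInMeasure μ (fun (m : ℕ) x => ‖H n (ns m) (ez x) - H n w0 (ez x)‖ ^ 2) atTop
      (fun _ => (0:ℝ)) := by
    have hc : ∀ m, Continuous fun x => ‖H n (ns m) (ez x) - H n w0 (ez x)‖ ^ 2 := fun m => by
      have c1 := H_cont_x n (ns m)
      have c2 := H_cont_x n w0
      fun_prop
    apply tendstoInMeasure_of_tendsto_eLpNorm one_ne_zero
    · intro m
      exact (hc m).aestronglyMeasurable
    · exact aestronglyMeasurable_const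
    · have e : ∀ m, eLpNorm ((fun x => ‖H n (ns m) (ez x) - H n w0 (ez x)‖ ^ 2) - fun _ => (0:ℝ)) 1 μ
          = ENNReal.ofReal (∫ x in (0:ℝ)..1, ‖H n (ns m) (ez x) - H n w0 (ez x)‖ ^ 2) := by
        intro m
        rw [eLpNorm_one_eq_lintegral_enorm, ← ofReal_integral_norm_eq_lintegral_enorm]
        · rw [intervalIntegral.integral_of_le zero_le_one]
          simp [hμ]
        · have t : IntegrableOn _ _ _ := (Continuous.intervalIntegrable (μ := volume) (hc m) 0 1).1
          exact Integrable.sub t (integrable_zero _ _ _)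
      simp only [e]
      have := (ENNReal.continuous_ofReal.tendsto 0).comp h1
      simpa [Function.comp_def] using this
  obtain ⟨ms, -, hms⟩ := hm.exists_seq_tendsto_ae
  refine ⟨ms, ?_⟩
  simp only [intervalIntegral.integral_of_le zero_le_one]
  apply tendsto_integral_of_dominated_convergence (fun x => ‖f x‖)
  · intro m
    exact hf.1.mul (H_cont_x n _).aestronglyMeasurable
  · exact hf.norm
  · intro m
    refine Eventually.of_forall fun x => ?_
    rw [norm_mul]
    exact mul_le_of_le_one_right (norm_nonneg _) (H_le _ _ _)
  · filter_upwards [hms] with x hx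
    refine Tendsto.const_mul _ ?_
    rw [tendsto_iff_norm_sub_tendsto_zero]
    have := hx.sqrt
    simpa [Real.sqrt_sq (norm_nonneg _)] using this

end blaschke
end LL

namespace LL
section final
open Complex Filter Topology

noncomputable def XX {d : ℕ} (x : EE d) (i : ℕ) : ℝ := if h : i < d + 1 then x ⟨i, h⟩ else 0

noncomputable def WW {d : ℕ} (x : EE d) (i : ℕ) : ℂ := (XX x (2 * i) : ℂ) + (XX x (2 * i + 1) : ℂ) * I

lemma XX_cont {d : ℕ} (i : ℕ) : Continuous (fun x : EE d => XX x i) := by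
  unfold XX
  split_ifs with h
  · exact continuous_apply _
  · exact continuous_const

lemma WW_cont {d : ℕ} : Continuous (WW : EE d → ℕ → ℂ) := by
  refine continuous_pi fun i => ?_
  unfold WW
  exact (continuous_ofReal.comp (XX_cont _)).add
    ((continuous_ofReal.comp (XX_cont _)).mul continuous_const)

lemma XX_neg {d : ℕ} (x : EE d) (i : ℕ) : XX (-x) i = - XX x i := by
  unfold XX
  split_ifs <;> simp

lemma WW_neg {d : ℕ} (x : EE d) : WW (-x) = - WW x := by
  ext1 i
  simp only [WW, XX_neg, Pi.neg_apply]
  push_cast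
  ring

lemma WW_ne {n : ℕ} (x : EE (2 * n + 1)) (hx : x ≠ 0) : NN (n + 1) (WW x) ≠ 0 := by
  intro h
  apply hx
  have h1 := (Finset.sum_eq_zero_iff_of_nonneg (fun _ _ => norm_nonneg _)).1 h
  have h2 : ∀ i < n + 1, XX x (2 * i) = 0 ∧ XX x (2 * i + 1) = 0 := by
    intro i hi
    have h3 := h1 i (Finset.mem_range.2 hi)
    rw [norm_eq_zero] at h3
    have hre := congrArg Complex.re h3
    have him := congrArg Complex.im h3
    simp [WW] at hre him
    exact ⟨hre, him⟩
  ext1 ⟨i, hi⟩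
  have hX : XX x i = x ⟨i, hi⟩ := by simp [XX, hi]
  rw [← hX]
  rcases Nat.even_or_odd' i with ⟨k, rfl | rfl⟩
  · exact (h2 k (by omega)).1
  · exact (h2 k (by omega)).2

noncomputable def FF (n : ℕ) (f : Fin n → ℝ → ℂ) (j : ℕ) (x : EE (2 * n + 1)) : ℂ :=
  if h : j < n then ∫ t in (0:ℝ)..1, f ⟨j, h⟩ t * H (n + 1) (WW x) (ez t) else 0

lemma FF_neg (n : ℕ) (f : Fin n → ℝ → ℂ) (j : ℕ) (x : EE (2 * n + 1)) :
    FF n f j (-x) = - FF n f j x := by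
  unfold FF
  split_ifs
  · simp only [WW_neg, H_neg, mul_neg, intervalIntegral.integral_neg]
  · simp

lemma FF_cont (n : ℕ) (f : Fin n → ℝ → ℂ) (hf : ∀ j, IntegrableOn (f j) (Set.Icc 0 1)) (j : ℕ)
    (x : EE (2 * n + 1)) (hx : x ≠ 0) : ContinuousAt (FF n f j) x := by
  unfold FF
  split_ifs with h
  · exact (F_cont (n + 1) (WW x) (WW_ne x hx) (f ⟨j, h⟩)
      ((hf _).mono_set Set.Ioc_subset_Icc_self)).comp (WW_cont.tendsto x)
  · exact continuousAt_const

lemma exists_zero (n : ℕ) (f : Fin n → ℝ → ℂ) (hf : ∀ j, IntegrableOn (f j) (Set.Icc 0 1)) :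
    ∃ w, NN (n + 1) w ≠ 0 ∧ ∀ j : Fin n, ∫ t in (0:ℝ)..1, f j t * H (n + 1) w (ez t) = 0 := by
  obtain ⟨x, hx, h⟩ := borsuk_ulam (2 * n + 1)
    (fun i x => if i % 2 = 0 then (FF n f (i / 2) x).re else (FF n f (i / 2) x).im)
    (by intro i x; simp only [FF_neg]; split_ifs <;> simp)
    (by
      intro i x hx
      have := FF_cont n f hf (i / 2) x hx
      by_cases hi : i % 2 = 0
      · simp only [hi, if_true]
        exact continuous_re.continuousAt.comp this
      · simp only [hi, if_false]
        exact continuous_im.continuousAt.comp this)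
  refine ⟨WW x, WW_ne x hx, fun j => ?_⟩
  have h1 := h (2 * j) (by omega)
  have h2 := h (2 * j + 1) (by omega)
  have e1 : 2 * (j : ℕ) % 2 = 0 := by omega
  have e2 : (2 * (j : ℕ) + 1) % 2 ≠ 0 := by omega
  have e3 : 2 * (j : ℕ) / 2 = j := by omega
  have e4 : (2 * (j : ℕ) + 1) / 2 = j := by omega
  rw [if_pos e1, e3] at h1
  rw [if_neg e2, e4] at h2
  have : FF n f j x = 0 := Complex.ext h1 h2
  simpa [FF] using this

end final
end LL

/-- **Lazarev–Lieb theorem with a `W^{1,1}`-norm bound.** Given integrable complex-valued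
functions `f 1, …, f n` on `[0,1]`, there is a smooth function `h : [0,1] → S¹` with
`‖h‖_{W^{1,1}} ≤ 1 + 2πn` such that `∫₀¹ f j · h = 0` for all `j`. -/
theorem lazarev_lieb_with_bound (n : ℕ) (f : Fin n → ℝ → ℂ)
    (hf : ∀ j, IntegrableOn (f j) (Set.Icc 0 1)) :
    ∃ h : ℝ → ℂ,
      ContDiffOn ℝ (⊤ : ℕ∞) h (Set.Icc 0 1) ∧
      (∀ x ∈ Set.Icc (0:ℝ) 1, ‖h x‖ = 1) ∧
      (∫ x in (0:ℝ)..1, ‖h x‖) + (∫ x in (0:ℝ)..1, ‖derivWithin h (Set.Icc 0 1) x‖)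
        ≤ 1 + 2 * Real.pi * n ∧
      ∀ j : Fin n, ∫ x in (0:ℝ)..1, f j x * h x = 0 := by
  obtain ⟨w, hw, hz⟩ := LL.exists_zero n f hf
  obtain ⟨hcd, hn, -, k, hk, hk0, hd, hB⟩ := LL.H_good n w hw
  refine ⟨fun x => LL.H (n + 1) w (LL.ez x), hcd.contDiffOn, fun x _ => hn x, ?_, hz⟩
  have e1 : ∫ x in (0:ℝ)..1, ‖(fun x => LL.H (n + 1) w (LL.ez x)) x‖ = 1 := by
    simp only [hn]; simp
  have e2 : ∫ x in (0:ℝ)..1, ‖derivWithin (fun x => LL.H (n + 1) w (LL.ez x)) (Set.Icc 0 1) x‖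
      = ∫ x in (0:ℝ)..1, k x := by
    apply intervalIntegral.integral_congr
    intro x hx
    rw [Set.uIcc_of_le zero_le_one] at hx
    have h1 := (hd x).hasDerivWithinAt.derivWithin (uniqueDiffOn_Icc zero_lt_one x hx)
    have h2 := hn x
    simp only at h1 h2 ⊢
    rw [h1, norm_mul, norm_mul, h2, Complex.norm_I, Complex.norm_real, Real.norm_of_nonneg (hk0 x)]
    ring
  rw [e1, e2]
  linarith
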